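/- For all integers k >= 0, j >= 0, m >= 1, setting n = 2m + kj, and for all rationals t_1, ..., t_m: \sum_{Q \in Q_{n,k}^{m,j}} \prod_{i=1}^{m} t_i^{\alpha_i(Q)} = (m/((m+j+1)(m+j))) * C(m+j, j) * \sum_{r=0}^{m} C(m+j+1, r) * (r!/m!) * B_{m,r}(1!t_1, 2!t_2, ...). -/

import Mathlib

open Finset

inductive Step : Type
  | u | d | h
deriving DecidableEq

/-- Lengths of maximal blocks of letters with `wt s ≠ none`, weighted by `wt`. -/
def runs (wt : Step → Option ℕ) : List Step → List ℕ
  | [] => []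
  | s :: l =>
    match wt s, runs wt l with
    | none, r => r
    | some n, r =>
      match l with
      | [] => [n]
      | s' :: _ =>
        match wt s' with
        | none => n :: r
        | some _ =>
          match r with
          | a :: rest => (n + a) :: rest
          | [] => [n]

def uRuns : List Step → List ℕ :=
  runs (fun s => match s with | Step.u => some 1 | _ => none)

def uhRuns (k : ℕ) : List Step → List ℕ :=
  runs (fun s => match s with | Step.u => some 1 | Step.h => some k | Step.d => none)

def alpha (i : ℕ) (w : List Step) : ℕ := (uRuns w).count i

def beta (i : ℕ) (w : List Step) : ℕ := (uRuns w).tail.count i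

def IsNonneg (w : List Step) : Prop :=
  ∀ i : ℕ, (w.take i).count Step.d ≤ (w.take i).count Step.u

def pathSet (m j : ℕ) : Set (List Step) :=
  {w | w.count Step.u = m ∧ w.count Step.d = m ∧ w.count Step.h = j ∧ IsNonneg w}

/-- no horizontal step lies on the x-axis -/
def NoLowH (w : List Step) : Prop :=
  ∀ (i : ℕ) (hi : i < w.length), w[i]'hi = Step.h →
    (w.take i).count Step.u ≠ (w.take i).count Step.d

def qSet (m j : ℕ) : Set (List Step) :=
  {w | w ∈ pathSet m j ∧ NoLowH w}

/-- normalized partial Bell polynomial (r!/m!) B_{m,r}(1!t₁,2!t₂,…) -/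
def bellNorm (m r : ℕ) (t : ℕ → ℚ) : ℚ :=
  ∑ f : Fin m → Fin (m + 1),
    if (∑ i : Fin m, (f i : ℕ)) = r ∧ (∑ i : Fin m, ((i : ℕ) + 1) * (f i : ℕ)) = m then
      (r.factorial : ℚ) / (∏ i : Fin m, ((f i : ℕ).factorial : ℚ)) * ∏ i : Fin m, t ((i : ℕ) + 1) ^ (f i : ℕ)
    else 0

/-- normalized potential polynomial  P_p^{(lam)}(1!t₁,2!t₂,…)/p! -/
def potential (lam p : ℕ) (t : ℕ → ℚ) : ℚ :=
  ∑ r ∈ Finset.range (p + 1), (Nat.choose lam r : ℚ) * bellNorm p r t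

/-!
A path with no horizontal-step on the axis is a word all of whose letters other than `u` are taken
at positive height. Let `T(X) = 1 + ∑ tᵢ Xⁱ`, and let `A(p, x, j)` and `B(p, x, j)` be the weighted
counts of the words leading from height `p` down to the axis with `x` letters `u` and `j` letters
`h`, where for `A` the first letter must not be `u`. Splitting off the leading run of `u`'s gives
`B(p, x, j) = ∑ a, tₐ A(p + a, x - a, j)` with `t₀ = 1`, and splitting off the first letter gives
`A(p + 1, x, j) = B(p, x, j) + B(p + 1, x, j - 1)`. With `N = p + x + j`, the number of letters
other than `u`, induction on `N` yields the ballot-type formulas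

`N A(p, x, j) = p C(N, j) [Xˣ] Tᴺ`,
`N (N + 1) B(p, x, j) = ((N + 1) p + x) C(N, j) [Xˣ] Tᴺ⁺¹`,

where the passage from `A` to `B` is the coefficient form of `X (Tᴺ⁺¹)' = (N + 1) (X T') Tᴺ`. At
`p = 0` the coefficient `[Xᵐ] T^(m + j + 1)` is a potential polynomial, by the binomial and
multinomial theorems.
-/

section PowerSeriesCoefficients

open PowerSeries

variable {R : Type*} [CommSemiring R]

lemma coeff_X_mul_derivative (f : R⟦X⟧) (n : ℕ) :
    coeff n (X * derivative R f) = n * coeff n f := by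
  cases n with
  | zero => simp
  | succ n => rw [coeff_succ_X_mul, coeff_derivative, mul_comm, Nat.cast_succ]

lemma succ_mul_sum_antidiagonal_add_mul_coeff (f : R⟦X⟧) (n p x : ℕ) :
    ((n : R) + 1) * ∑ a ∈ antidiagonal x, ((p : R) + a.1) * (coeff a.1 f * coeff a.2 (f ^ n)) =
      ((n + 1) * p + x) * coeff x (f ^ (n + 1)) := by
  have euler : ((n : R) + 1) * ∑ a ∈ antidiagonal x, a.1 * coeff a.1 f * coeff a.2 (f ^ n) =
      x * coeff x (f ^ (n + 1)) := by
    have h : X * derivative R (f ^ (n + 1)) =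
        C ((n : R) + 1) * (X * derivative R f * f ^ n) := by
      rw [derivative_pow, Nat.add_sub_cancel, ← Nat.cast_succ, map_natCast]
      ring
    rw [← coeff_X_mul_derivative, h, coeff_C_mul, coeff_mul]
    simp only [coeff_X_mul_derivative]
  calc ((n : R) + 1) * ∑ a ∈ antidiagonal x, ((p : R) + a.1) * (coeff a.1 f * coeff a.2 (f ^ n))
      = (n + 1) * p * (∑ a ∈ antidiagonal x, coeff a.1 f * coeff a.2 (f ^ n)) +
          (n + 1) * ∑ a ∈ antidiagonal x, a.1 * coeff a.1 f * coeff a.2 (f ^ n) := by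
        simp only [add_mul, sum_add_distrib, mul_add, mul_sum, mul_assoc]
    _ = ((n + 1) * p + x) * coeff x (f ^ (n + 1)) := by
        rw [← coeff_mul, ← pow_succ', euler, ← add_mul]

lemma coeff_pow_trunc (f : R⟦X⟧) (m r : ℕ) :
    coeff m ((trunc (m + 1) f : R⟦X⟧) ^ r) = coeff m (f ^ r) := by
  rw [← coeff_coe_trunc_of_lt m.lt_succ_self, trunc_trunc_pow,
    coeff_coe_trunc_of_lt m.lt_succ_self]

lemma coeff_sum_monomial_pow {ι : Type*} [DecidableEq ι] (s : Finset ι) (e : ι → ℕ) (c : ι → R)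
    (m r : ℕ) :
    coeff m ((∑ i ∈ s, monomial (e i) (c i)) ^ r) =
      ∑ k ∈ piAntidiag s r with ∑ i ∈ s, e i * k i = m,
        (Nat.multinomial s k : R) * ∏ i ∈ s, c i ^ k i := by
  rw [sum_pow_eq_sum_piAntidiag, map_sum, sum_filter]
  refine sum_congr rfl fun k _ ↦ ?_
  simp only [← map_natCast (C (R := R)), coeff_C_mul, monomial_pow, prod_monomial,
    coeff_monomial, mul_ite, mul_zero, mul_comm (k _), eq_comm (a := m)]

lemma trunc_succ_eq_sum_monomial {f : R⟦X⟧} (hf : constantCoeff f = 0) (m : ℕ) :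
    (trunc (m + 1) f : R⟦X⟧) =
      ∑ i : Fin m, monomial ((i : ℕ) + 1) (coeff ((i : ℕ) + 1) f) := by
  rw [Fin.sum_univ_eq_sum_range (fun i ↦ monomial (i + 1) (coeff (i + 1) f)) m]
  ext n
  cases n with
  | zero => simp [coeff_trunc, hf, coeff_monomial]
  | succ n => simp [coeff_trunc, coeff_monomial]

lemma coeff_one_add_pow {f : R⟦X⟧} (hf : constantCoeff f = 0) (lam p : ℕ) :
    coeff p ((1 + f) ^ lam) = ∑ r ∈ range (p + 1), (lam.choose r : R) * coeff p (f ^ r) := by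
  have high_power {r : ℕ} (hr : p < r) : coeff p (f ^ r) = 0 :=
    coeff_of_lt_order p <|
      (Nat.cast_lt.mpr hr).trans_le (le_order_pow_of_constantCoeff_eq_zero r hf)
  rw [add_comm, add_pow, map_sum]
  simp only [one_pow, mul_one, ← map_natCast (C (R := R)), coeff_mul_C, mul_comm (coeff _ _)]
  trans ∑ r ∈ range (max lam p + 1), (lam.choose r : R) * coeff p (f ^ r)
  · refine sum_subset (by simp) fun r _ hr ↦ ?_
    rw [Nat.choose_eq_zero_of_lt (by simpa using hr), Nat.cast_zero, zero_mul]
  · refine (sum_subset (by simp) fun r _ hr ↦ ?_).symm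
    rw [high_power (by simpa using hr), mul_zero]

end PowerSeriesCoefficients

section Bell

open PowerSeries

lemma cast_multinomial_eq_div {K ι : Type*} [Field K] [CharZero K] (s : Finset ι) (k : ι → ℕ) :
    (Nat.multinomial s k : K) =
      ((∑ i ∈ s, k i).factorial : K) / ∏ i ∈ s, ((k i).factorial : K) := by
  rw [eq_div_iff (prod_ne_zero_iff.mpr fun i _ ↦ Nat.cast_ne_zero.mpr (k i).factorial_ne_zero),
    ← Nat.multinomial_spec, Nat.cast_mul, Nat.cast_prod, mul_comm]

lemma bellNorm_eq_sum_piAntidiag (m r : ℕ) (t : ℕ → ℚ) :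
    bellNorm m r t =
      ∑ k ∈ piAntidiag (univ : Finset (Fin m)) r with ∑ i : Fin m, ((i : ℕ) + 1) * k i = m,
        (Nat.multinomial univ k : ℚ) * ∏ i : Fin m, t ((i : ℕ) + 1) ^ k i := by
  rw [bellNorm, ← sum_filter]
  refine sum_bij (fun f _ i ↦ (f i : ℕ)) ?_ ?_ ?_ ?_
  · simp
  · intro f _ g _ hfg
    exact funext fun i ↦ Fin.ext (congrFun hfg i)
  · intro k hk
    simp only [mem_filter, mem_piAntidiag] at hk
    have le_m (i : Fin m) : k i ≤ m :=
      calc k i ≤ ((i : ℕ) + 1) * k i := Nat.le_mul_of_pos_left _ i.val.succ_pos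
        _ ≤ ∑ i : Fin m, ((i : ℕ) + 1) * k i :=
          single_le_sum (f := fun i : Fin m ↦ ((i : ℕ) + 1) * k i) (by simp) (mem_univ i)
        _ = m := hk.2
    exact ⟨fun i ↦ ⟨k i, Nat.lt_succ_of_le (le_m i)⟩, by simp [hk.1.1, hk.2], rfl⟩
  · intro f hf
    rw [cast_multinomial_eq_div, (mem_filter.mp hf).2.1]

lemma bellNorm_eq_coeff_pow {f : ℚ⟦X⟧} (hf : constantCoeff f = 0) {t : ℕ → ℚ}
    (ht : ∀ i, coeff (i + 1) f = t (i + 1)) (m r : ℕ) :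
    bellNorm m r t = coeff m (f ^ r) := by
  rw [← coeff_pow_trunc, trunc_succ_eq_sum_monomial hf, coeff_sum_monomial_pow,
    bellNorm_eq_sum_piAntidiag]
  simp only [ht]

lemma potential_eq_coeff_pow (lam p : ℕ) (t : ℕ → ℚ) :
    potential lam p t = coeff p (mk (Function.update t 0 1) ^ lam) := by
  set f : ℚ⟦X⟧ := mk (Function.update t 0 0)
  have hf : constantCoeff f = 0 := by simp [f, ← coeff_zero_eq_constantCoeff_apply]
  have one_add_f : mk (Function.update t 0 1) = 1 + f := by
    ext (_ | n) <;> simp [f, coeff_one, hf]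
  rw [one_add_f, coeff_one_add_pow hf, potential]
  simp only [bellNorm_eq_coeff_pow (t := t) hf fun i ↦ by simp [f]]

end Bell

section Runs

lemma uRuns_d_cons (w : List Step) : uRuns (Step.d :: w) = uRuns w := by
  simp [uRuns, runs]

lemma uRuns_h_cons (w : List Step) : uRuns (Step.h :: w) = uRuns w := by
  simp [uRuns, runs]

lemma uRuns_u_cons {w : List Step} (hw : w.head? ≠ some Step.u) :
    uRuns (Step.u :: w) = 1 :: uRuns w := by
  rcases w with _ | ⟨_ | _ | _, w⟩ <;> simp_all [uRuns, runs]

lemma uRuns_u_u_cons {w : List Step} {a : ℕ} {l : List ℕ} (h : uRuns (Step.u :: w) = a :: l) :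
    uRuns (Step.u :: Step.u :: w) = (1 + a) :: l := by
  unfold uRuns at h ⊢
  rw [runs, h]

lemma uRuns_replicate_append {w : List Step} (hw : w.head? ≠ some Step.u) (c : ℕ) :
    uRuns (List.replicate (c + 1) Step.u ++ w) = (c + 1) :: uRuns w := by
  induction c with
  | zero => exact uRuns_u_cons hw
  | succ c ih =>
    exact (uRuns_u_u_cons ih).trans (by rw [add_comm])

lemma sum_uRuns (w : List Step) : (uRuns w).sum = w.count Step.u := by
  induction w with
  | nil => rfl
  | cons s w ih =>
    cases s with
    | d => simpa [uRuns_d_cons] using ih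
    | h => simpa [uRuns_h_cons] using ih
    | u =>
      by_cases hw : w.head? = some Step.u
      · obtain ⟨v, rfl⟩ := List.head?_eq_some_iff.mp hw
        cases hv : uRuns (Step.u :: v) with
        | nil => simp [hv] at ih
        | cons a l =>
          rw [hv, List.sum_cons] at ih
          rw [uRuns_u_u_cons hv, List.sum_cons, List.count_cons_self, ← ih]
          ring
      · rw [uRuns_u_cons hw, List.sum_cons, ih, List.count_cons_self, add_comm]

lemma pos_of_mem_uRuns {w : List Step} {i : ℕ} (hi : i ∈ uRuns w) : 0 < i := by
  induction w generalizing i with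
  | nil => simp [uRuns, runs] at hi
  | cons s w ih =>
    cases s with
    | d => exact ih (uRuns_d_cons w ▸ hi)
    | h => exact ih (uRuns_h_cons w ▸ hi)
    | u =>
      by_cases hw : w.head? = some Step.u
      · obtain ⟨v, rfl⟩ := List.head?_eq_some_iff.mp hw
        cases hv : uRuns (Step.u :: v) with
        | nil => simpa [hv] using sum_uRuns (Step.u :: v)
        | cons a l =>
          rw [hv] at ih
          rw [uRuns_u_u_cons hv] at hi
          grind
      · rw [uRuns_u_cons hw] at hi
        grind

variable {R : Type*} [CommSemiring R]

/-- The weight `∏ T i` of a word, over the lengths `i` of its `u`-segments. -/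
def runWeight (T : ℕ → R) (w : List Step) : R := ((uRuns w).map T).prod

lemma runWeight_d_cons (T : ℕ → R) (w : List Step) :
    runWeight T (Step.d :: w) = runWeight T w := by
  rw [runWeight, uRuns_d_cons, runWeight]

lemma runWeight_h_cons (T : ℕ → R) (w : List Step) :
    runWeight T (Step.h :: w) = runWeight T w := by
  rw [runWeight, uRuns_h_cons, runWeight]

lemma runWeight_replicate_append {T : ℕ → R} (hT : T 0 = 1) {w : List Step}
    (hw : w.head? ≠ some Step.u) (c : ℕ) :
    runWeight T (List.replicate c Step.u ++ w) = T c * runWeight T w := by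
  cases c with
  | zero => simp [hT]
  | succ c => rw [runWeight, uRuns_replicate_append hw, List.map_cons, List.prod_cons, runWeight]

lemma runWeight_congr {T T' : ℕ → R} (h : ∀ i, 0 < i → T i = T' i) (w : List Step) :
    runWeight T w = runWeight T' w :=
  congrArg List.prod <| List.map_congr_left fun _ hi ↦ h _ (pos_of_mem_uRuns hi)

lemma prod_Icc_pow_alpha (T : ℕ → R) {m : ℕ} {w : List Step} (hw : w.count Step.u ≤ m) :
    ∏ i ∈ Icc 1 m, T i ^ alpha i w = runWeight T w := by
  rw [runWeight, prod_list_map_count]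
  refine (prod_subset (fun i hi ↦ ?_) fun i _ hi ↦ ?_).symm
  · rw [List.mem_toFinset] at hi
    exact mem_Icc.mpr ⟨pos_of_mem_uRuns hi,
      (List.le_sum_of_mem hi).trans <| (sum_uRuns w).trans_le hw⟩
  · rw [alpha, List.count_eq_zero_of_not_mem (List.mem_toFinset.not.mp hi), pow_zero]

end Runs

section Completions

/-- Started at height `p`, the word takes each of its steps other than `u` at positive height.
From the `x`-axis this expresses in one condition that the path is nonnegative and that no
horizontal step lies on the axis. -/
def IsPositiveOffUp (p : ℕ) (w : List Step) : Prop :=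
  ∀ (i : ℕ) (hi : i < w.length), w[i] ≠ Step.u →
    (w.take i).count Step.d < p + (w.take i).count Step.u

lemma isPositiveOffUp_nil (p : ℕ) : IsPositiveOffUp p [] := by
  simp [IsPositiveOffUp]

lemma isPositiveOffUp_cons {p : ℕ} {s : Step} {w : List Step} :
    IsPositiveOffUp p (s :: w) ↔ (s ≠ Step.u → 0 < p) ∧
      ∀ (i : ℕ) (hi : i < w.length), w[i] ≠ Step.u →
        (s :: w.take i).count Step.d < p + (s :: w.take i).count Step.u := by
  constructor
  · intro h
    refine ⟨fun hs ↦ by simpa using h 0 (by simp) hs, fun i hi hu ↦ ?_⟩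
    exact h (i + 1) (by simpa using hi) hu
  · rintro ⟨h0, h⟩ (_ | i) hi hu
    · simpa using h0 hu
    · exact h i (by simpa using hi) hu

lemma isPositiveOffUp_u_cons {p : ℕ} {w : List Step} :
    IsPositiveOffUp p (Step.u :: w) ↔ IsPositiveOffUp (p + 1) w := by
  rw [isPositiveOffUp_cons, IsPositiveOffUp]
  simp [add_assoc, add_comm 1]

lemma isPositiveOffUp_succ_d_cons {p : ℕ} {w : List Step} :
    IsPositiveOffUp (p + 1) (Step.d :: w) ↔ IsPositiveOffUp p w := by
  rw [isPositiveOffUp_cons, IsPositiveOffUp]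
  simp [add_right_comm p 1]

lemma isPositiveOffUp_succ_h_cons {p : ℕ} {w : List Step} :
    IsPositiveOffUp (p + 1) (Step.h :: w) ↔ IsPositiveOffUp (p + 1) w := by
  rw [isPositiveOffUp_cons, IsPositiveOffUp]
  simp

lemma isPositiveOffUp_zero_iff {w : List Step} :
    IsPositiveOffUp 0 w ↔ IsNonneg w ∧ NoLowH w := by
  constructor
  · intro hw
    refine ⟨fun i ↦ ?_, fun i hi hh ↦ ?_⟩
    · induction i with
      | zero => simp
      | succ i ih =>
        by_cases hi : i < w.length
        · have h := hw i hi
          rw [List.take_succ_eq_append_getElem hi]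
          cases hs : w[i] <;> simp [hs] at h ⊢ <;> lia
        · rwa [List.take_of_length_le (by lia), ← List.take_of_length_le (not_lt.mp hi)]
    · simpa using (hw i hi (by simp [hh])).ne'
  · rintro ⟨hnonneg, hlow⟩ i hi hu
    have h := hnonneg (i + 1)
    have h' := hnonneg i
    have h'' := hlow i hi
    rw [List.take_succ_eq_append_getElem hi] at h
    cases hs : w[i] <;> simp [hs] at h h'' hu ⊢ <;> lia

/-- The words that complete a path from height `p` down to the `x`-axis with `x` up-steps and `j`
horizontal-steps, all steps other than up-steps being taken at positive height. -/
def completions (p x j : ℕ) : Set (List Step) :=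
  {w | w.count Step.u = x ∧ w.count Step.d = p + x ∧ w.count Step.h = j ∧ IsPositiveOffUp p w}

/-- The completions from height `p` that do not start with an up-step. -/
def nonUpCompletions (p x j : ℕ) : Set (List Step) :=
  {w ∈ completions p x j | w.head? ≠ some Step.u}

lemma qSet_eq_completions (m j : ℕ) : qSet m j = completions 0 m j := by
  ext w
  simp only [qSet, pathSet, completions, Set.mem_ofPred_eq, isPositiveOffUp_zero_iff, zero_add,
    and_assoc]

instance : Finite Step :=
  Finite.of_surjective ![Step.u, Step.d, Step.h] fun s ↦ by
    cases s
    exacts [⟨0, rfl⟩, ⟨1, rfl⟩, ⟨2, rfl⟩]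

lemma length_eq_count_add (w : List Step) :
    w.length = w.count Step.u + w.count Step.d + w.count Step.h := by
  induction w with
  | nil => rfl
  | cons s w ih => cases s <;> simp [ih] <;> lia

lemma finite_completions (p x j : ℕ) : (completions p x j).Finite :=
  (List.finite_length_eq Step (x + (p + x) + j)).subset fun w ⟨hu, hd, hh, _⟩ ↦ by
    rw [Set.mem_ofPred_eq, length_eq_count_add, hu, hd, hh]

lemma finite_nonUpCompletions (p x j : ℕ) : (nonUpCompletions p x j).Finite :=
  (finite_completions p x j).subset (Set.sep_subset _ _)

lemma completions_zero_up (p j : ℕ) : completions p 0 j = nonUpCompletions p 0 j := by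
  ext (_ | ⟨_ | _ | _, w⟩) <;> simp [nonUpCompletions, completions]

lemma completions_succ_up (p x j : ℕ) :
    completions p (x + 1) j =
      (Step.u :: ·) '' completions (p + 1) x j ∪ nonUpCompletions p (x + 1) j := by
  ext (_ | ⟨_ | _ | _, w⟩) <;>
    simp [nonUpCompletions, completions, isPositiveOffUp_u_cons, add_right_comm p 1, add_assoc]

lemma nonUpCompletions_zero_zero_zero : nonUpCompletions 0 0 0 = {[]} := by
  ext (_ | ⟨_ | _ | _, w⟩) <;>
    simp [nonUpCompletions, completions, isPositiveOffUp_nil]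

lemma nonUpCompletions_zero_of_pos {x j : ℕ} (h : 0 < x + j) : nonUpCompletions 0 x j = ∅ := by
  ext (_ | ⟨_ | _ | _, w⟩) <;> grind [nonUpCompletions, completions, isPositiveOffUp_cons]

lemma nonUpCompletions_succ_zero (p x : ℕ) :
    nonUpCompletions (p + 1) x 0 = (Step.d :: ·) '' completions p x 0 := by
  ext (_ | ⟨_ | _ | _, w⟩) <;>
    simp [nonUpCompletions, completions, isPositiveOffUp_succ_d_cons, add_right_comm p 1]

lemma nonUpCompletions_succ_succ (p x j : ℕ) :
    nonUpCompletions (p + 1) x (j + 1) =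
      (Step.d :: ·) '' completions p x (j + 1) ∪ (Step.h :: ·) '' completions (p + 1) x j := by
  ext (_ | ⟨_ | _ | _, w⟩) <;>
    simp [nonUpCompletions, completions, isPositiveOffUp_succ_d_cons, isPositiveOffUp_succ_h_cons,
      add_right_comm p 1]

end Completions

section WeightedSums

/-- The total weight of the completions from height `p`. -/
noncomputable def completionSum {R : Type*} [CommSemiring R] (T : ℕ → R) (p x j : ℕ) : R :=
  ∑ᶠ w ∈ completions p x j, runWeight T w

/-- The total weight of the completions from height `p` that do not start with an up-step. -/
noncomputable def nonUpCompletionSum {R : Type*} [CommSemiring R] (T : ℕ → R) (p x j : ℕ) : R :=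
  ∑ᶠ w ∈ nonUpCompletions p x j, runWeight T w

lemma finsum_mem_cons_image {α M : Type*} [AddCommMonoid M] (a : α) (S : Set (List α))
    (f : List α → M) : ∑ᶠ w ∈ (a :: ·) '' S, f w = ∑ᶠ w ∈ S, f (a :: w) :=
  finsum_mem_image List.cons_injective.injOn

section Recurrence

variable {R : Type*} [CommSemiring R] {T : ℕ → R}

lemma finsum_runWeight_replicate_append (hT : T 0 = 1) (c p x j : ℕ) :
    ∑ᶠ w ∈ completions p x j, runWeight T (List.replicate c Step.u ++ w) =
      ∑ a ∈ antidiagonal x, T (c + a.1) * nonUpCompletionSum T (p + a.1) a.2 j := by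
  have close_run (c p x : ℕ) :
      ∑ᶠ w ∈ nonUpCompletions p x j, runWeight T (List.replicate c Step.u ++ w) =
        T c * nonUpCompletionSum T p x j := by
    rw [nonUpCompletionSum, mul_finsum_mem' _ _ (finite_nonUpCompletions p x j)]
    exact finsum_mem_congr rfl fun w hw ↦ runWeight_replicate_append hT hw.2 c
  induction x generalizing c p with
  | zero => simp [completions_zero_up, close_run]
  | succ x ih =>
    have hdisj : Disjoint ((Step.u :: ·) '' completions (p + 1) x j)
        (nonUpCompletions p (x + 1) j) := by
      rw [Set.disjoint_left]
      rintro _ ⟨w, -, rfl⟩ hw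
      exact hw.2 rfl
    have extend_run (w : List Step) : List.replicate c Step.u ++ Step.u :: w =
        List.replicate (c + 1) Step.u ++ w := by
      rw [List.replicate_succ', List.append_assoc, List.singleton_append]
    rw [completions_succ_up, finsum_mem_union hdisj ((finite_completions _ _ _).image _)
      (finite_nonUpCompletions _ _ _), finsum_mem_cons_image, close_run, add_comm,
      Finset.Nat.sum_antidiagonal_succ]
    simp only [extend_run, ih, add_zero, add_right_comm _ 1, add_assoc]

lemma completionSum_eq_sum_antidiagonal (hT : T 0 = 1) (p x j : ℕ) :
    completionSum T p x j =
      ∑ a ∈ antidiagonal x, T a.1 * nonUpCompletionSum T (p + a.1) a.2 j := by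
  simpa [completionSum] using finsum_runWeight_replicate_append hT 0 p x j

lemma nonUpCompletionSum_zero_zero_zero : nonUpCompletionSum T 0 0 0 = 1 := by
  simp [nonUpCompletionSum, nonUpCompletions_zero_zero_zero, runWeight, uRuns, runs]

lemma nonUpCompletionSum_zero_of_pos {x j : ℕ} (h : 0 < x + j) :
    nonUpCompletionSum T 0 x j = 0 := by
  rw [nonUpCompletionSum, nonUpCompletions_zero_of_pos h, finsum_mem_empty]

lemma nonUpCompletionSum_succ_zero (p x : ℕ) :
    nonUpCompletionSum T (p + 1) x 0 = completionSum T p x 0 := by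
  simp only [nonUpCompletionSum, completionSum, nonUpCompletions_succ_zero, finsum_mem_cons_image,
    runWeight_d_cons]

lemma nonUpCompletionSum_succ_succ (p x j : ℕ) :
    nonUpCompletionSum T (p + 1) x (j + 1) =
      completionSum T p x (j + 1) + completionSum T (p + 1) x j := by
  have hdisj : Disjoint ((Step.d :: ·) '' completions p x (j + 1))
      ((Step.h :: ·) '' completions (p + 1) x j) := by
    rw [Set.disjoint_left]
    rintro _ ⟨w, -, rfl⟩ ⟨v, -, hv⟩
    cases hv
  rw [nonUpCompletionSum, nonUpCompletions_succ_succ,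
    finsum_mem_union hdisj ((finite_completions _ _ _).image _)
      ((finite_completions _ _ _).image _)]
  simp only [finsum_mem_cons_image, runWeight_d_cons, runWeight_h_cons, completionSum]

end Recurrence

section ClosedForm

open PowerSeries

variable {R : Type*} [CommRing R] {T : ℕ → R}

lemma mul_completionSum_of_nonUpCompletionSum (hT : T 0 = 1) {N p x j : ℕ}
    (h : ∀ a ∈ antidiagonal x, (N : R) * nonUpCompletionSum T (p + a.1) a.2 j =
      ((p + a.1 : ℕ) : R) * N.choose j * coeff a.2 (mk T ^ N)) :
    (N : R) * (N + 1) * completionSum T p x j =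
      N.choose j * ((N + 1) * p + x) * coeff x (mk T ^ (N + 1)) := by
  calc (N : R) * (N + 1) * completionSum T p x j
      = (N + 1) * ∑ a ∈ antidiagonal x,
          T a.1 * (N * nonUpCompletionSum T (p + a.1) a.2 j) := by
        rw [completionSum_eq_sum_antidiagonal hT, mul_comm (N : R), mul_assoc, mul_sum]
        simp only [mul_left_comm]
    _ = N.choose j * ((N + 1) * ∑ a ∈ antidiagonal x,
          ((p : R) + a.1) * (coeff a.1 (mk T) * coeff a.2 (mk T ^ N))) := by
        rw [mul_left_comm, mul_sum (a := (N.choose j : R))]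
        congr 1
        refine sum_congr rfl fun a ha ↦ ?_
        rw [h a ha, coeff_mk]
        push_cast
        ring
    _ = N.choose j * ((N + 1) * p + x) * coeff x (mk T ^ (N + 1)) := by
        rw [succ_mul_sum_antidiagonal_add_mul_coeff, mul_assoc]

variable [NoZeroDivisors R] [CharZero R]

lemma mul_nonUpCompletionSum_succ (hT : T 0 = 1) {N p x j : ℕ} (hN : p + x + j = N)
    (h : ∀ p' x' j', p' + x' + j' = N → (N : R) * (N + 1) * completionSum T p' x' j' =
      N.choose j' * ((N + 1) * p' + x') * coeff x' (mk T ^ (N + 1))) :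
    ((N + 1 : ℕ) : R) * nonUpCompletionSum T (p + 1) x j =
      ((p + 1 : ℕ) : R) * (N + 1).choose j * coeff x (mk T ^ (N + 1)) := by
  rcases N.eq_zero_or_pos with rfl | hpos
  · obtain ⟨rfl, rfl, rfl⟩ : p = 0 ∧ x = 0 ∧ j = 0 := by lia
    simp [nonUpCompletionSum_succ_zero, completionSum_eq_sum_antidiagonal hT,
      nonUpCompletionSum_zero_zero_zero, hT]
  refine mul_left_cancel₀ (Nat.cast_ne_zero.mpr hpos.ne' : (N : R) ≠ 0) ?_
  cases j with
  | zero =>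
    have hp := h p x 0 hN
    rw [nonUpCompletionSum_succ_zero]
    have hN' : (N : R) = p + x := by rw [← hN]; push_cast; ring
    simp only [Nat.choose_zero_right] at hp ⊢
    push_cast at hp ⊢
    linear_combination hp - coeff x (mk T ^ (N + 1)) * hN'
  | succ j =>
    have hp := h p x (j + 1) hN
    have hp' := h (p + 1) x j (by lia)
    have hN' : (N : R) = p + x + (j + 1) := by rw [← hN]; push_cast; ring
    have choose_ratio : (N.choose (j + 1) : R) * (j + 1) = N.choose j * (p + x + 1) := by
      have h := Nat.choose_succ_right_eq N j
      rw [show N - j = p + x + 1 by lia] at h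
      exact_mod_cast h
    rw [nonUpCompletionSum_succ_succ, Nat.choose_succ_succ]
    push_cast at hp hp' ⊢
    set F := coeff x (mk T ^ (N + 1))
    linear_combination hp + hp' - F * choose_ratio - F * N.choose (j + 1) * hN'

theorem mul_nonUpCompletionSum (hT : T 0 = 1) {N p x j : ℕ} (hN : p + x + j = N) :
    (N : R) * nonUpCompletionSum T p x j = p * N.choose j * coeff x (mk T ^ N) := by
  induction N generalizing p x j with
  | zero => simp [show p = 0 by lia]
  | succ N ih =>
    cases p with
    | zero => simp [nonUpCompletionSum_zero_of_pos (T := T) (show 0 < x + j by lia)]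
    | succ p =>
      refine mul_nonUpCompletionSum_succ hT (by lia) fun p' x' j' hN' ↦ ?_
      refine mul_completionSum_of_nonUpCompletionSum hT fun a ha ↦ ih ?_
      rw [← hN', ← mem_antidiagonal.mp ha, add_assoc p']

theorem mul_completionSum (hT : T 0 = 1) {N p x j : ℕ} (hN : p + x + j = N) :
    (N : R) * (N + 1) * completionSum T p x j =
      N.choose j * ((N + 1) * p + x) * coeff x (mk T ^ (N + 1)) :=
  mul_completionSum_of_nonUpCompletionSum hT fun a ha ↦
    mul_nonUpCompletionSum hT (by rw [← hN, ← mem_antidiagonal.mp ha, add_assoc p])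

end ClosedForm

lemma finsum_mem_qSet_prod_pow_alpha (m j : ℕ) (t : ℕ → ℚ) :
    ∑ᶠ w ∈ qSet m j, ∏ i ∈ Icc 1 m, t i ^ alpha i w =
      completionSum (Function.update t 0 1) 0 m j := by
  rw [qSet_eq_completions, completionSum]
  refine finsum_mem_congr rfl fun w hw ↦ ?_
  rw [prod_Icc_pow_alpha t hw.1.le]
  exact runWeight_congr (fun i hi ↦ (Function.update_of_ne hi.ne' _ _).symm) w

end WeightedSums

theorem stmt8 (k j m : ℕ) (hm : 1 ≤ m) (t : ℕ → ℚ) :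
    (∑ᶠ w ∈ qSet m j, ∏ i ∈ Finset.Icc 1 m, t i ^ alpha i w) =
      (m : ℚ) / ((m + j + 1) * (m + j)) * Nat.choose (m + j) j *
        ∑ r ∈ Finset.range (m + 1), (Nat.choose (m + j + 1) r : ℚ) * bellNorm m r t := by
  have closed_form := mul_completionSum (Function.update_self 0 (1 : ℚ) t)
    (show 0 + m + j = m + j by rw [zero_add])
  have denom_ne_zero : ((m : ℚ) + j + 1) * (m + j) ≠ 0 := by
    exact_mod_cast (Nat.mul_ne_zero (by lia) (by lia) : (m + j + 1) * (m + j) ≠ 0)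
  rw [finsum_mem_qSet_prod_pow_alpha, ← potential, potential_eq_coeff_pow]
  push_cast at closed_form
  rw [div_mul_eq_mul_div, div_mul_eq_mul_div, eq_div_iff denom_ne_zero]
  linear_combination closed_form
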